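/- For every integer n ≥ 1 and every complex number w with Re w > 0, the derivative satisfies R_n'(w) ≠ 0. -/

import Mathlib

/-- `R n z = ∑_{m=0}^{n} ((n+m)! / (m! (n-m)!)) z^m` for `z ∈ ℂ`. -/
noncomputable def R (n : ℕ) (z : ℂ) : ℂ :=
  ∑ m ∈ Finset.range (n + 1),
    ((Nat.factorial (n + m) : ℂ) / ((Nat.factorial m : ℂ) * (Nat.factorial (n - m) : ℂ))) * z ^ m

/-!
The polynomials satisfy `R_{n+2}(z) = 2(2n+3) z R_{n+1}(z) + R_n(z)`, so the ratios
`q_n = R_{n+1}(z) / R_n(z)` obey `q_{n+1} = 2(2n+3) z + 1 / q_n`. For `Re z ≥ 0` this step preserves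
`Re q_n > 0`, and `q_0 = 1 + 2z`; hence no `R_n` vanishes on the closed right half-plane, and by the
Gauss–Lucas theorem neither does `R_n'` when `n ≥ 1`.
-/

open Polynomial

theorem re_inv_pos {z : ℂ} (hz : 0 < z.re) : 0 < z⁻¹.re := by
  rw [Complex.inv_re]
  exact div_pos hz (Complex.normSq_pos.2 (Complex.ne_zero_of_re_pos hz))

theorem re_ratio_pos_of_recurrence {u a : ℕ → ℂ} {b : ℕ → ℝ} (ha : ∀ n, 0 ≤ (a n).re)
    (hb : ∀ n, 0 < b n) (hu : ∀ n, u (n + 2) = a n * u (n + 1) + b n * u n)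
    (h₀ : 0 < (u 1 / u 0).re) (n : ℕ) : 0 < (u (n + 1) / u n).re := by
  induction n with
  | zero => exact h₀
  | succ n ih =>
    have hne : u (n + 1) ≠ 0 := (div_ne_zero_iff.1 (Complex.ne_zero_of_re_pos ih)).1
    have hstep : u (n + 2) / u (n + 1) = a n + b n * (u (n + 1) / u n)⁻¹ := by
      rw [hu, inv_div]
      field_simp
    rw [hstep, Complex.add_re, Complex.re_ofReal_mul]
    exact add_pos_of_nonneg_of_pos (ha n) (mul_pos (hb n) (re_inv_pos ih))

theorem mem_of_isRoot_derivative_of_convex {p : ℂ[X]} (hp : 0 < p.degree) {s : Set ℂ}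
    (hs : Convex ℝ s) (hroots : ∀ z, p.IsRoot z → z ∈ s) {w : ℂ} (hw : p.derivative.IsRoot w) :
    w ∈ s := by
  have hderiv : p.derivative ≠ 0 :=
    mt derivative_eq_zero.1 (natDegree_pos_iff_degree_pos.2 hp).ne'
  have hmem : w ∈ p.derivative.rootSet ℂ := mem_rootSet.2 ⟨hderiv, by simpa using hw⟩
  refine convexHull_min (fun z hz ↦ hroots z ?_) hs
    (rootSet_derivative_subset_convexHull_rootSet hp hmem)
  simpa using (mem_rootSet.1 hz).2

theorem choose_succ_add_choose_mul_succ {n k j : ℕ} (h : k + j = 2 * n + 1) :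
    ((n + 1).choose (k + 1) + n.choose (k + 1)) * (k + 1) = j * n.choose k := by
  have habsorb := Nat.add_one_mul_choose_eq n k
  have hscale : (k + j) * n.choose k = (2 * n + 1) * n.choose k := by rw [h]
  rw [Nat.choose_succ_succ'] at habsorb ⊢
  linarith

theorem centralBinom_succ_mul_factorial_succ (m : ℕ) :
    (m + 1).centralBinom * (m + 1).factorial =
      2 * (2 * m + 1) * (m.centralBinom * m.factorial) := by
  rw [Nat.factorial_succ, ← mul_assoc, mul_comm _ (m + 1), Nat.succ_mul_centralBinom_succ,
    mul_assoc]

/-- The coefficient `(n+m)! / (m! (n-m)!)` of `z ^ m` in `R n z`, which is `2 ^ m` times the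
corresponding coefficient of the `n`-th Bessel polynomial. It is encoded as a natural number that
vanishes for `n < m`, so that its recurrence holds for all indices. -/
def besselCoeff (n m : ℕ) : ℕ :=
  (n + m).choose (2 * m) * (m.centralBinom * m.factorial)

theorem besselCoeff_zero_right (n : ℕ) : besselCoeff n 0 = 1 := by
  simp [besselCoeff]

theorem besselCoeff_eq_zero_of_lt {n m : ℕ} (h : n < m) : besselCoeff n m = 0 := by
  rw [besselCoeff, Nat.choose_eq_zero_of_lt (by omega), zero_mul]

theorem besselCoeff_pos {n m : ℕ} (h : m ≤ n) : 0 < besselCoeff n m :=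
  Nat.mul_pos (Nat.choose_pos (by omega)) (Nat.mul_pos m.centralBinom_pos m.factorial_pos)

theorem besselCoeff_mul_factorial {n m : ℕ} (h : m ≤ n) :
    besselCoeff n m * (m.factorial * (n - m).factorial) = (n + m).factorial := by
  have hcentral : m.centralBinom * m.factorial * m.factorial = (2 * m).factorial := by
    rw [Nat.centralBinom_eq_two_mul_choose, two_mul, Nat.add_choose_mul_factorial_mul_factorial]
  calc besselCoeff n m * (m.factorial * (n - m).factorial)
      = (n + m).choose (2 * m) * (m.centralBinom * m.factorial * m.factorial)
          * (n - m).factorial := by rw [besselCoeff]; ring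
    _ = (n + m).choose (2 * m) * (2 * m).factorial * (n + m - 2 * m).factorial := by
        rw [hcentral, show n + m - 2 * m = n - m by omega]
    _ = (n + m).factorial := Nat.choose_mul_factorial_mul_factorial (by omega)

theorem besselCoeff_add_two_succ (n m : ℕ) :
    besselCoeff (n + 2) (m + 1) =
      2 * (2 * n + 3) * besselCoeff (n + 1) m + besselCoeff n (m + 1) := by
  obtain ⟨N, hN⟩ : ∃ N, N = n + m + 1 := ⟨_, rfl⟩
  have hpascal : (N + 2).choose (2 * m + 2) =
      (N + 1).choose (2 * m + 1) + N.choose (2 * m + 1) + N.choose (2 * m + 2) := by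
    rw [Nat.choose_succ_succ' (N + 1), Nat.choose_succ_succ' N (2 * m + 1)]
    ring
  have hchoose : ((N + 1).choose (2 * m + 1) + N.choose (2 * m + 1)) * (2 * m + 1) =
      (2 * n + 3) * N.choose (2 * m) :=
    choose_succ_add_choose_mul_succ (by omega)
  simp only [besselCoeff, centralBinom_succ_mul_factorial_succ,
    show n + 2 + (m + 1) = N + 2 by omega, show n + 1 + m = N by omega,
    show n + (m + 1) = N by omega, show 2 * (m + 1) = 2 * m + 2 by omega, hpascal]
  linear_combination 2 * (m.centralBinom * m.factorial) * hchoose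

/-- The `n`-th Bessel polynomial in the variable `2 * X`: the polynomial with values `R n`,
to which the Gauss–Lucas theorem is applied. -/
noncomputable def besselPoly (n : ℕ) : ℂ[X] :=
  ∑ m ∈ Finset.range (n + 1), C (besselCoeff n m : ℂ) * X ^ m

theorem coeff_besselPoly (n m : ℕ) : (besselPoly n).coeff m = besselCoeff n m := by
  simp only [besselPoly, finsetSum_coeff, coeff_C_mul_X_pow, Finset.sum_ite_eq, Finset.mem_range]
  split_ifs with h
  · rfl
  · rw [besselCoeff_eq_zero_of_lt (by omega), Nat.cast_zero]

theorem besselPoly_add_two (n : ℕ) :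
    besselPoly (n + 2) = C (2 * (2 * n + 3) : ℂ) * (besselPoly (n + 1) * X) + besselPoly n := by
  ext m
  rw [coeff_add, coeff_C_mul]
  cases m with
  | zero => simp [coeff_besselPoly, besselCoeff_zero_right]
  | succ m =>
    rw [coeff_mul_X]
    simp only [coeff_besselPoly]
    exact_mod_cast besselCoeff_add_two_succ n m

theorem degree_besselPoly_pos {n : ℕ} (hn : 1 ≤ n) : 0 < (besselPoly n).degree := by
  have hcoeff : (besselPoly n).coeff n ≠ 0 := by
    rw [coeff_besselPoly]
    exact_mod_cast (besselCoeff_pos le_rfl).ne'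
  exact lt_of_lt_of_le (by exact_mod_cast hn) (le_degree_of_ne_zero hcoeff)

theorem eval_besselPoly (n : ℕ) (z : ℂ) : (besselPoly n).eval z = R n z := by
  simp only [besselPoly, R, eval_finsetSum, eval_mul, eval_C, eval_pow, eval_X]
  refine Finset.sum_congr rfl fun m hm ↦ ?_
  have hfact : (m.factorial * (n - m).factorial : ℂ) ≠ 0 := by
    exact_mod_cast Nat.mul_ne_zero m.factorial_ne_zero (n - m).factorial_ne_zero
  congr 1
  rw [eq_div_iff hfact]
  exact_mod_cast besselCoeff_mul_factorial (Finset.mem_range_succ_iff.1 hm)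

theorem R_add_two (n : ℕ) (z : ℂ) :
    R (n + 2) z = 2 * (2 * n + 3) * z * R (n + 1) z + R n z := by
  simp only [← eval_besselPoly, besselPoly_add_two, eval_add, eval_mul, eval_C, eval_X]
  ring

theorem R_ne_zero_of_re_nonneg (n : ℕ) {z : ℂ} (hz : 0 ≤ z.re) : R n z ≠ 0 := by
  have hratio₀ : 0 < (R 1 z / R 0 z).re := by
    have hquot : R 1 z / R 0 z = 1 + 2 * z := by simp [R, Finset.sum_range_succ]
    rw [hquot, show (1 + 2 * z).re = 1 + 2 * z.re by simp]
    positivity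
  have hcoeff (k : ℕ) : 0 ≤ (2 * (2 * k + 3) * z : ℂ).re := by
    rw [show (2 * (2 * k + 3) : ℂ) = ((2 * (2 * k + 3) : ℝ) : ℂ) by push_cast; rfl,
      Complex.re_ofReal_mul]
    positivity
  have hratio : 0 < (R (n + 1) z / R n z).re :=
    re_ratio_pos_of_recurrence (u := fun k ↦ R k z) (b := fun _ ↦ 1) hcoeff
      (fun _ ↦ one_pos) (fun k ↦ by simpa using R_add_two k z) hratio₀ n
  exact (div_ne_zero_iff.1 (Complex.ne_zero_of_re_pos hratio)).2

theorem deriv_Rn_ne_zero_of_re_pos_general (n : ℕ) (hn : 1 ≤ n) (w : ℂ) (hw : 0 ≤ w.re) :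
    deriv (R n) w ≠ 0 := by
  have hR : R n = fun z ↦ (besselPoly n).eval z := funext fun z ↦ (eval_besselPoly n z).symm
  have hroots (z : ℂ) (hz : (besselPoly n).IsRoot z) : z.re < 0 := by
    by_contra! hre
    exact R_ne_zero_of_re_nonneg n hre (eval_besselPoly n z ▸ hz)
  rw [hR, Polynomial.deriv]
  intro hroot
  exact hw.not_gt (mem_of_isRoot_derivative_of_convex (degree_besselPoly_pos hn)
    (convex_halfSpace_re_lt 0) hroots hroot)

/-- For `n ≥ 1` and `Re w > 0`, the derivative `R_n'(w) ≠ 0`. -/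
theorem deriv_Rn_ne_zero_of_re_pos (n : ℕ) (hn : 1 ≤ n) (w : ℂ) (hw : 0 < w.re) :
    deriv (R n) w ≠ 0 :=
  deriv_Rn_ne_zero_of_re_pos_general n hn w hw.le
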